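/- arXiv:2008.08820 — 3 statements merged into one kernel-verified Lean document; each statement's English description precedes it below -/
import Mathlib

section
/- Let r ≥ 1 and let L = {k₁, …, k_r} be a set of r distinct integers all ≥ 2. Then there exists a reduced, finitely generated, atomic, commutative cancellative monoid H whose set of atoms consists of pairwise distinct elements u_{i,j} for 1 ≤ j ≤ k_i, 1 ≤ i ≤ r, with the following properties: (a) u_{1,1}⋯u_{1,k₁} = u_{2,1}⋯u_{2,k₂} = … = u_{r,1}⋯u_{r,k_r}; (b) every b ∈ H not divisible by u_{1,1}⋯u_{1,k₁} has exactly one factorization into atoms (i.e., a unique multiset of atoms with product b); (c) for every a ∈ H there are a unique n ∈ ℕ₀ and a unique b ∈ H not divisible by u_{1,1}⋯u_{1,k₁} such that a = (u_{1,1}⋯u_{1,k₁})ⁿ b and L(a) = nL + L(b). Moreover, 𝓛(H) = { {0}, {1} } ∪ { y + nL : y, n ∈ ℕ₀ }. -/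
open Pointwise

/-- `H` is atomic: every non-unit is a finite product of atoms (irreducible elements). -/
def MonoidAtomic (H : Type*) [CancelCommMonoid H] : Prop :=
  ∀ a : H, ¬ IsUnit a → ∃ l : Multiset H, (∀ x ∈ l, Irreducible x) ∧ l.prod = a

/-- `H` is reduced: the only unit is the identity. -/
def MonoidReduced (H : Type*) [CancelCommMonoid H] : Prop :=
  ∀ a : H, IsUnit a → a = 1

/-- The set of lengths `L(a)`: all `k ≥ 1` such that `a` is a product of `k` atoms,
together with `0` if `a` is a unit. -/
def setOfLengths {H : Type*} [CancelCommMonoid H] (a : H) : Set ℕ :=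
  {k | (k = 0 ∧ IsUnit a) ∨
    (1 ≤ k ∧ ∃ l : Multiset H, Multiset.card l = k ∧ (∀ x ∈ l, Irreducible x) ∧ l.prod = a)}

/-- The system of sets of lengths `𝓛(H) = { L(a) : a ∈ H }`. -/
def systemOfLengths (H : Type*) [CancelCommMonoid H] : Set (Set ℕ) :=
  {L | ∃ a : H, setOfLengths a = L}

/-- The `n`-fold sumset `nL = L + … + L`, with `0L = {0}`. -/
def nfoldSumset (L : Set ℕ) : ℕ → Set ℕ
  | 0 => {0}
  | n + 1 => L + nfoldSumset L n


namespace RSI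

variable {r : ℕ} (k : Fin r → ℕ)

abbrev S := Σ i : Fin r, Fin (k i)

/-- the i-th block -/
def T (i : Fin r) : Multiset (S k) := Finset.univ.val.map (fun j : Fin (k i) => (⟨i, j⟩ : S k))

def Fr (m : Multiset (S k)) : Prop := ∀ i, ∃ j : Fin (k i), Multiset.count (⟨i, j⟩ : S k) m = 0

theorem card_T (i : Fin r) : (T k i).card = k i := by simp [T]

theorem nodup_T (i : Fin r) : (T k i).Nodup := by
  unfold T
  refine Multiset.Nodup.map ?_ Finset.univ.nodup
  intro a b h
  simpa using h

theorem count_T (i i' : Fin r) (j : Fin (k i)) :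
    Multiset.count (⟨i, j⟩ : S k) (T k i') = if i = i' then 1 else 0 := by
  rw [Multiset.count_eq_of_nodup (nodup_T k i')]
  congr 1
  simp only [T, Multiset.mem_map, eq_iff_iff]
  constructor
  · rintro ⟨a, _, h⟩
    exact (congrArg Sigma.fst h).symm
  · rintro rfl
    exact ⟨j, Finset.mem_univ_val _, rfl⟩

theorem count_bind (c : Multiset (Fin r)) (i : Fin r) (j : Fin (k i)) :
    Multiset.count (⟨i, j⟩ : S k) (c.bind (T k)) = Multiset.count i c := by
  induction c using Multiset.induction_on with
  | empty => simp
  | cons a c ih => rw [Multiset.cons_bind, Multiset.count_add, ih, count_T, Multiset.count_cons, add_comm]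

theorem card_bind (c : Multiset (Fin r)) : (c.bind (T k)).card = (c.map k).sum := by
  rw [Multiset.card_bind]; congr 1
  exact Multiset.map_congr rfl (fun i _ => card_T k i)

theorem T_le {m : Multiset (S k)} {i : Fin r} (h : ∀ j : Fin (k i), Multiset.count (⟨i, j⟩ : S k) m ≠ 0) :
    T k i ≤ m := by
  rw [Multiset.le_iff_subset (nodup_T k i)]
  intro x hx
  simp only [T, Multiset.mem_map] at hx
  obtain ⟨j, _, rfl⟩ := hx
  by_contra hh
  exact h j (Multiset.count_eq_zero_of_notMem hh)

theorem exists_nf (hk2 : ∀ i, 2 ≤ k i) (m : Multiset (S k)) : ∃ (c : Multiset (Fin r)) (b : Multiset (S k)),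
    Fr k b ∧ m = c.bind (T k) + b := by
  induction hn : m.card using Nat.strong_induction_on generalizing m with
  | _ n ih =>
    by_cases hf : Fr k m
    · exact ⟨0, m, hf, by simp⟩
    · unfold Fr at hf
      push Not at hf
      obtain ⟨i, hi⟩ := hf
      obtain ⟨m', rfl⟩ := Multiset.le_iff_exists_add.1 (T_le k hi)
      have h2 := hk2 i
      rw [Multiset.card_add, card_T] at hn
      obtain ⟨c, b, hb, rfl⟩ := ih m'.card (by omega) m' rfl
      exact ⟨i ::ₘ c, b, hb, by rw [Multiset.cons_bind, add_assoc]⟩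

theorem nf_unique {c c' : Multiset (Fin r)} {b b' : Multiset (S k)} (hb : Fr k b) (hb' : Fr k b')
    (h : c.bind (T k) + b = c'.bind (T k) + b') : c = c' ∧ b = b' := by
  have hc : c = c' := by
    ext i
    obtain ⟨j, hj⟩ := hb i
    obtain ⟨j', hj'⟩ := hb' i
    have h1 := congrArg (Multiset.count (⟨i, j⟩ : S k)) h
    have h2 := congrArg (Multiset.count (⟨i, j'⟩ : S k)) h
    simp only [Multiset.count_add, count_bind] at h1 h2
    omega
  subst hc
  exact ⟨rfl, add_left_cancel h⟩

def con : AddCon (Multiset (S k)) where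
  r m m' := ∃ c c' : Multiset (Fin r), c.card = c'.card ∧ m + c.bind (T k) = m' + c'.bind (T k)
  iseqv := by
    refine ⟨fun m => ⟨0, 0, rfl, rfl⟩, ?_, ?_⟩
    · rintro m m' ⟨c, c', h, h'⟩
      exact ⟨c', c, h.symm, h'.symm⟩
    · rintro m m' m'' ⟨c, c', h, h'⟩ ⟨d, d', g, g'⟩
      refine ⟨c + d, c' + d', by simp [h, g], ?_⟩
      rw [Multiset.add_bind, Multiset.add_bind, ← add_assoc, h', add_right_comm, g', add_assoc,
        add_comm (d'.bind _)]
  add' := by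
    rintro m m' n n' ⟨c, c', h, h'⟩ ⟨d, d', g, g'⟩
    refine ⟨c + d, c' + d', by simp [h, g], ?_⟩
    rw [Multiset.add_bind, Multiset.add_bind, add_add_add_comm, h', g', add_add_add_comm]

theorem con_def (m m' : Multiset (S k)) : con k m m' ↔
  ∃ c c' : Multiset (Fin r), c.card = c'.card ∧ m + c.bind (T k) = m' + c'.bind (T k) := Iff.rfl

abbrev H := Multiplicative (con k).Quotient

def P (m : Multiset (S k)) : H k := Multiplicative.ofAdd (m : (con k).Quotient)

theorem P_add (m m' : Multiset (S k)) : P k (m + m') = P k m * P k m' := rfl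
theorem P_zero : P k 0 = 1 := rfl

theorem P_surj (a : H k) : ∃ m, P k m = a := by
  obtain ⟨m, hm⟩ := Quotient.exists_rep (Multiplicative.toAdd a)
  exact ⟨m, hm⟩

theorem P_eq {m m' : Multiset (S k)} : P k m = P k m' ↔
    ∃ c c' : Multiset (Fin r), c.card = c'.card ∧ m + c.bind (T k) = m' + c'.bind (T k) := by
  rw [← con_def, ← AddCon.eq]
  exact Iff.rfl

instance : CancelCommMonoid (H k) :=
  { (inferInstance : CommMonoid (H k)) with
    mul_left_cancel := by
      intro a b c h
      obtain ⟨a, rfl⟩ := P_surj k a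
      obtain ⟨b, rfl⟩ := P_surj k b
      obtain ⟨c, rfl⟩ := P_surj k c
      have h : P k a * P k b = P k a * P k c := h
      rw [← P_add, ← P_add, P_eq] at h
      obtain ⟨d, d', h, h'⟩ := h
      rw [P_eq]
      refine ⟨d, d', h, ?_⟩
      rw [add_assoc, add_assoc] at h'
      exact add_left_cancel h' }

def u (s : S k) : H k := P k {s}

theorem P_map (m : Multiset (S k)) : (m.map (u k)).prod = P k m := by
  induction m using Multiset.induction_on with
  | empty => rfl
  | cons a m ih => rw [Multiset.map_cons, Multiset.prod_cons, ih, u, ← P_add, Multiset.singleton_add]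

theorem P_T (i i' : Fin r) : P k (T k i) = P k (T k i') := by
  rw [P_eq]
  exact ⟨{i'}, {i}, rfl, by simp [add_comm]⟩

theorem P_bind (i : Fin r) (c : Multiset (Fin r)) : P k (c.bind (T k)) = P k (T k i) ^ c.card := by
  induction c using Multiset.induction_on with
  | empty => simp [P_zero]
  | cons a m ih => rw [Multiset.cons_bind, P_add, ih, Multiset.card_cons, pow_succ', P_T k a i]

theorem P_nf {c c' : Multiset (Fin r)} {b b' : Multiset (S k)} (hb : Fr k b) (hb' : Fr k b')
    (h : P k (c.bind (T k) + b) = P k (c'.bind (T k) + b')) : c.card = c'.card ∧ b = b' := by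
  rw [P_eq] at h
  obtain ⟨d, d', h, h'⟩ := h
  rw [add_right_comm, add_right_comm _ b', ← Multiset.add_bind, ← Multiset.add_bind] at h'
  obtain ⟨h1, h2⟩ := nf_unique k hb hb' h'
  have := congrArg Multiset.card h1
  simp only [Multiset.card_add] at this
  exact ⟨by omega, h2⟩

variable {k}


theorem P_inj (hk2 : ∀ i, 2 ≤ k i) {m b : Multiset (S k)} (hb : Fr k b) (h : P k m = P k b) : m = b := by
  obtain ⟨c, b', hb', rfl⟩ := exists_nf k hk2 m
  have h' : P k (c.bind (T k) + b') = P k ((0 : Multiset (Fin r)).bind (T k) + b) := by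
    rw [h]; simp
  obtain ⟨h1, h2⟩ := P_nf k hb' hb h'
  rw [Multiset.card_zero, Multiset.card_eq_zero] at h1
  subst h1 h2
  simp

theorem Fr_nsmul (hk2 : ∀ i, 2 ≤ k i) (n : ℕ) (s : S k) : Fr k (Multiset.replicate n s) := by
  intro i
  by_contra! h
  have hk := hk2 i
  have key : ∀ j : Fin (k i), s = ⟨i, j⟩ := by
    intro j
    have := h j
    rw [Multiset.count_replicate] at this
    by_contra hh
    exact this (if_neg hh)
  have h0 := (key ⟨0, by omega⟩).symm.trans (key ⟨1, by omega⟩)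
  simp at h0

theorem Fr_zero (hk2 : ∀ i, 2 ≤ k i) : Fr k 0 := by
  intro i
  exact ⟨⟨0, by have := hk2 i; omega⟩, by simp⟩

theorem Fr_single (hk2 : ∀ i, 2 ≤ k i) (s : S k) : Fr k {s} := by
  simpa using Fr_nsmul hk2 1 s

theorem P_unit (hk2 : ∀ i, 2 ≤ k i) {m : Multiset (S k)} (h : IsUnit (P k m)) : m = 0 := by
  obtain ⟨b, hb⟩ := isUnit_iff_exists_inv.1 h
  obtain ⟨b, rfl⟩ := P_surj k b
  rw [← P_add, ← P_zero] at hb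
  have := P_inj hk2 (Fr_zero hk2) hb
  exact (add_eq_zero.1 this).1

theorem u_inj (hk2 : ∀ i, 2 ≤ k i) : Function.Injective (u k) := by
  intro s t h
  exact Multiset.singleton_inj.1 (P_inj hk2 (Fr_single hk2 t) h)

theorem irr_iff (hk2 : ∀ i, 2 ≤ k i) (a : H k) : Irreducible a ↔ ∃ s, u k s = a := by
  constructor
  · intro h
    obtain ⟨m, rfl⟩ := P_surj k a
    induction m using Multiset.induction_on with
    | empty => exact absurd (P_zero k ▸ isUnit_one) h.not_isUnit
    | cons s m _ =>
      refine ⟨s, ?_⟩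
      rw [← Multiset.singleton_add, P_add] at h ⊢
      rcases h.isUnit_or_isUnit rfl with h | h
      · have := P_unit hk2 h
        simp at this
      · rw [P_unit hk2 h, P_zero, mul_one]; rfl
  · rintro ⟨s, rfl⟩
    refine ⟨fun h => ?_, ?_⟩
    · have := P_unit hk2 h
      simp at this
    · intro a b h
      obtain ⟨a, rfl⟩ := P_surj k a
      obtain ⟨b, rfl⟩ := P_surj k b
      rw [← P_add] at h
      have := congrArg Multiset.card (P_inj hk2 (Fr_single hk2 s) h.symm)
      rw [Multiset.card_add, Multiset.card_singleton] at this
      rcases Nat.eq_zero_or_pos a.card with h0 | h0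
      · left
        rw [Multiset.card_eq_zero.1 h0, P_zero]; exact isUnit_one
      · right
        rw [Multiset.card_eq_zero.1 (by omega : b.card = 0), P_zero]; exact isUnit_one

theorem fact_iff (hk2 : ∀ i, 2 ≤ k i) (l : Multiset (H k)) :
    (∀ x ∈ l, Irreducible x) ↔ ∃ m : Multiset (S k), m.map (u k) = l := by
  constructor
  · intro h
    induction l using Multiset.induction_on with
    | empty => exact ⟨0, rfl⟩
    | cons a l ih =>
      obtain ⟨m, rfl⟩ := ih (fun x hx => h x (Multiset.mem_cons_of_mem hx))
      obtain ⟨s, rfl⟩ := (irr_iff hk2 a).1 (h a (Multiset.mem_cons_self _ _))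
      exact ⟨s ::ₘ m, Multiset.map_cons _ _ _⟩
  · rintro ⟨m, rfl⟩ x hx
    obtain ⟨s, _, rfl⟩ := Multiset.mem_map.1 hx
    exact (irr_iff hk2 _).2 ⟨s, rfl⟩

theorem lengths_eq (hk2 : ∀ i, 2 ≤ k i) (a : H k) :
    setOfLengths a = {n | ∃ m : Multiset (S k), m.card = n ∧ P k m = a} := by
  ext n
  simp only [setOfLengths, Set.mem_setOf_eq]
  constructor
  · rintro (⟨rfl, h⟩ | ⟨_, l, rfl, h, rfl⟩)
    · obtain ⟨m, rfl⟩ := P_surj k a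
      exact ⟨m, by rw [P_unit hk2 h]; rfl, rfl⟩
    · obtain ⟨m, rfl⟩ := (fact_iff hk2 l).1 h
      exact ⟨m, by simp, (P_map k m).symm⟩
  · rintro ⟨m, rfl, rfl⟩
    rcases Nat.eq_zero_or_pos m.card with h0 | h0
    · left
      refine ⟨h0, ?_⟩
      rw [Multiset.card_eq_zero.1 h0, P_zero]; exact isUnit_one
    · right
      exact ⟨h0, m.map (u k), by simp, (fact_iff hk2 _).2 ⟨m, rfl⟩, P_map k m⟩

theorem nfold_eq (n : ℕ) : nfoldSumset (Set.range k) n =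
    {x | ∃ c : Multiset (Fin r), c.card = n ∧ (c.map k).sum = x} := by
  induction n with
  | zero =>
    ext x
    simp [nfoldSumset, eq_comm]
  | succ n ih =>
    ext x
    rw [nfoldSumset, ih, Set.mem_add]
    constructor
    · rintro ⟨_, ⟨i, rfl⟩, _, ⟨c, rfl, rfl⟩, rfl⟩
      exact ⟨i ::ₘ c, by simp, by simp⟩
    · rintro ⟨c, hc, rfl⟩
      obtain ⟨i, c', rfl⟩ := Multiset.card_pos_iff_exists_mem.1 (by omega : 0 < c.card) |>.imp
        (fun i hi => Multiset.exists_cons_of_mem hi)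
      refine ⟨k i, ⟨i, rfl⟩, (c'.map k).sum, ⟨c', by simpa using hc, rfl⟩, by simp⟩

theorem W_nf (i : Fin r) {n n' : ℕ} {b b' : Multiset (S k)} (hb : Fr k b) (hb' : Fr k b')
    (h : P k (T k i) ^ n * P k b = P k (T k i) ^ n' * P k b') : n = n' ∧ b = b' := by
  have e : ∀ n, P k (T k i) ^ n = P k ((Multiset.replicate n i).bind (T k)) := by
    intro n
    rw [P_bind k i, Multiset.card_replicate]
  rw [e, e, ← P_add, ← P_add] at h
  simpa using P_nf k hb hb' h

theorem W_exists (hk2 : ∀ i, 2 ≤ k i) (i : Fin r) (a : H k) :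
    ∃ n b, Fr k b ∧ a = P k (T k i) ^ n * P k b := by
  obtain ⟨m, rfl⟩ := P_surj k a
  obtain ⟨c, b, hb, rfl⟩ := exists_nf k hk2 m
  exact ⟨c.card, b, hb, by rw [P_add, P_bind k i]⟩

theorem not_dvd_iff (hk2 : ∀ i, 2 ≤ k i) (i : Fin r) (m : Multiset (S k)) :
    ¬ P k (T k i) ∣ P k m ↔ Fr k m := by
  constructor
  · intro h
    by_contra hf
    unfold Fr at hf
    push Not at hf
    obtain ⟨i', hi⟩ := hf
    obtain ⟨m', rfl⟩ := Multiset.le_iff_exists_add.1 (T_le k hi)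
    rw [P_add, P_T k i' i] at h
    exact h (dvd_mul_right _ _)
  · rintro h ⟨a, ha⟩
    obtain ⟨n, b, hb, rfl⟩ := W_exists hk2 i a
    have : P k (T k i) ^ 0 * P k m = P k (T k i) ^ (n+1) * P k b := by
      rw [ha, pow_zero, one_mul, pow_succ', mul_assoc]
    have := (W_nf i h hb this).1
    omega

theorem lengths_Fr (hk2 : ∀ i, 2 ≤ k i) {b : Multiset (S k)} (hb : Fr k b) :
    setOfLengths (P k b) = {b.card} := by
  rw [lengths_eq hk2]
  ext x
  simp only [Set.mem_setOf_eq, Set.mem_singleton_iff]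
  constructor
  · rintro ⟨m, rfl, h⟩
    rw [P_inj hk2 hb h]
  · rintro rfl
    exact ⟨b, rfl, rfl⟩

theorem lengths_W (hk2 : ∀ i, 2 ≤ k i) (i : Fin r) (n : ℕ) {b : Multiset (S k)} (hb : Fr k b) :
    setOfLengths (P k (T k i) ^ n * P k b) = nfoldSumset (Set.range k) n + {b.card} := by
  rw [lengths_eq hk2, nfold_eq]
  ext x
  simp only [Set.mem_setOf_eq, Set.mem_add, Set.mem_singleton_iff]
  constructor
  · rintro ⟨m, rfl, h⟩
    obtain ⟨c, b', hb', rfl⟩ := exists_nf k hk2 m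
    rw [P_add, P_bind k i] at h
    obtain ⟨h1, rfl⟩ := W_nf i hb' hb h
    exact ⟨_, ⟨c, h1, rfl⟩, _, rfl, by rw [Multiset.card_add, card_bind]⟩
  · rintro ⟨_, ⟨c, rfl, rfl⟩, _, rfl, rfl⟩
    exact ⟨c.bind (T k) + b, by rw [Multiset.card_add, card_bind], by rw [P_add, P_bind k i]⟩

end RSI

/-- Proposition 3.1: for `r ≥ 1` and a set `L = {k₁, …, k_r}` of `r` distinct integers
all `≥ 2`, there is a reduced, finitely generated, atomic, commutative cancellative monoid `H`
whose atoms are pairwise distinct elements `u i j` (`i : Fin r`, `j : Fin (k i)`)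
such that, with `W = u_{1,1} ⋯ u_{1,k₁}`:
(a) all products `u_{i,1} ⋯ u_{i,k_i}` are equal to `W`;
(b) every `b ∈ H` not divisible by `W` has exactly one factorization into atoms;
(c) every `a ∈ H` is uniquely `a = Wⁿ b` with `W ∤ b` and `L(a) = nL + L(b)`;
moreover `𝓛(H) = {{0}, {1}} ∪ { y + nL : y, n ∈ ℕ }`. -/
theorem realization_single_indecomposable
    (r : ℕ) (hr : 1 ≤ r) (k : Fin r → ℕ) (hk2 : ∀ i, 2 ≤ k i)
    (hkinj : Function.Injective k) (L : Set ℕ) (hL : L = Set.range k) :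
    ∃ (H : Type) (_ : CancelCommMonoid H) (u : (i : Fin r) → Fin (k i) → H),
      MonoidReduced H ∧ Monoid.FG H ∧ MonoidAtomic H ∧
      Function.Injective (fun p : Σ i : Fin r, Fin (k i) => u p.1 p.2) ∧
      {a : H | Irreducible a} = {a : H | ∃ i j, a = u i j} ∧
      ∃ W : H, W = ∏ j : Fin (k ⟨0, hr⟩), u ⟨0, hr⟩ j ∧
        (∀ i : Fin r, (∏ j : Fin (k i), u i j) = W) ∧
        (∀ b : H, ¬ W ∣ b →
          ∃! l : Multiset H, (∀ x ∈ l, Irreducible x) ∧ l.prod = b) ∧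
        (∀ a : H, ∃! p : ℕ × H, ¬ W ∣ p.2 ∧ a = W ^ p.1 * p.2 ∧
          setOfLengths a = nfoldSumset L p.1 + setOfLengths p.2) ∧
        systemOfLengths H =
          {({0} : Set ℕ), {1}} ∪ {S | ∃ y n : ℕ, S = ({y} : Set ℕ) + nfoldSumset L n} := by
  subst hL
  have hW : ∀ i, (∏ j : Fin (k i), RSI.u k ⟨i, j⟩) = RSI.P k (RSI.T k i) := by
    intro i
    rw [← RSI.P_map, RSI.T, Multiset.map_map]
    rfl
  refine ⟨RSI.H k, inferInstance, fun i j => RSI.u k ⟨i, j⟩, ?_, ?_, ?_, RSI.u_inj hk2, ?_,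
    RSI.P k (RSI.T k ⟨0, hr⟩), (hW _).symm, ?_, ?_, ?_, ?_⟩
  · intro a ha
    obtain ⟨m, rfl⟩ := RSI.P_surj k a
    rw [RSI.P_unit hk2 ha, RSI.P_zero]
  · rw [Monoid.fg_iff]
    refine ⟨Set.range (RSI.u k), ?_, Set.finite_range _⟩
    rw [eq_top_iff]
    intro a _
    obtain ⟨m, rfl⟩ := RSI.P_surj k a
    rw [← RSI.P_map]
    refine Submonoid.multiset_prod_mem _ _ ?_
    intro x hx
    obtain ⟨s, _, rfl⟩ := Multiset.mem_map.1 hx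
    exact Submonoid.subset_closure ⟨s, rfl⟩
  · intro a _
    obtain ⟨m, rfl⟩ := RSI.P_surj k a
    exact ⟨m.map (RSI.u k), (RSI.fact_iff hk2 _).2 ⟨m, rfl⟩, RSI.P_map k m⟩
  · ext a
    rw [Set.mem_setOf_eq, RSI.irr_iff hk2]
    constructor
    · rintro ⟨⟨i, j⟩, rfl⟩
      exact ⟨i, j, rfl⟩
    · rintro ⟨i, j, rfl⟩
      exact ⟨⟨i, j⟩, rfl⟩
  · intro i
    rw [hW]
    exact RSI.P_T k _ _
  · intro b hb
    obtain ⟨m, rfl⟩ := RSI.P_surj k b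
    rw [RSI.not_dvd_iff hk2] at hb
    refine ⟨m.map (RSI.u k), ⟨(RSI.fact_iff hk2 _).2 ⟨m, rfl⟩, RSI.P_map k m⟩, ?_⟩
    rintro l ⟨h1, h2⟩
    obtain ⟨m', rfl⟩ := (RSI.fact_iff hk2 l).1 h1
    rw [RSI.P_map] at h2
    rw [RSI.P_inj hk2 hb h2]
  · intro a
    obtain ⟨n, b, hb, rfl⟩ := RSI.W_exists hk2 ⟨0, hr⟩ a
    refine ⟨(n, RSI.P k b), ⟨(RSI.not_dvd_iff hk2 _ _).2 hb, rfl, ?_⟩, ?_⟩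
    · rw [RSI.lengths_W hk2 _ _ hb, RSI.lengths_Fr hk2 hb]
    · rintro ⟨n', a'⟩ ⟨h1, h2, _⟩
      obtain ⟨b', rfl⟩ := RSI.P_surj k a'
      have hb' := (RSI.not_dvd_iff hk2 _ _).1 h1
      obtain ⟨rfl, rfl⟩ := RSI.W_nf _ hb hb' h2
      rfl
  · ext X
    have key : X ∈ systemOfLengths (RSI.H k) ↔
        ∃ y n : ℕ, X = ({y} : Set ℕ) + nfoldSumset (Set.range k) n := by
      constructor
      · rintro ⟨a, rfl⟩
        obtain ⟨n, b, hb, rfl⟩ := RSI.W_exists hk2 ⟨0, hr⟩ a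
        exact ⟨b.card, n, by rw [RSI.lengths_W hk2 _ _ hb, add_comm]⟩
      · rintro ⟨y, n, rfl⟩
        have h2 := hk2 ⟨0, hr⟩
        have hb := RSI.Fr_nsmul hk2 y ⟨⟨0, hr⟩, ⟨0, by omega⟩⟩
        refine ⟨_, (RSI.lengths_W hk2 ⟨0, hr⟩ n hb).trans ?_⟩
        rw [Multiset.card_replicate, add_comm]
    rw [key]
    constructor
    · intro h
      exact Or.inr h
    · rintro ((rfl | rfl) | h)
      · exact ⟨0, 0, by simp [nfoldSumset]⟩
      · exact ⟨1, 0, by simp [nfoldSumset]⟩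
      · exact h
end

section
/- Let r ≥ 1 and let L = {k₁, …, k_r} be a set of r distinct integers all ≥ 2 with k₁ < … < k_r. Then there exists a reduced, finitely generated, atomic, commutative cancellative monoid H with atoms u_{i,j} (1 ≤ j ≤ k_i, 1 ≤ i ≤ r) satisfying u_{1,1}⋯u_{1,k₁} = … = u_{r,1}⋯u_{r,k_r} and 𝓛(H) = { {0}, {1} } ∪ { y + nL : y, n ∈ ℕ₀ }, whose catenary degree satisfies c(H) = 0 if r = 1 and c(H) = k_r if r ≥ 2. -/
open Pointwise

/-- The factorizations of `a`: multisets of atoms with product `a`. -/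
def factorizationsOf {H : Type*} [CancelCommMonoid H] (a : H) : Set (Multiset H) :=
  {l | (∀ x ∈ l, Irreducible x) ∧ l.prod = a}

/-- The distance between two factorizations `z, z'`:
`max(|z \ (z ∩ z')|, |z' \ (z ∩ z')|)`. -/
noncomputable def factorizationDist {H : Type*} (z z' : Multiset H) : ℕ :=
  letI := Classical.decEq H
  max (Multiset.card (z - z ∩ z')) (Multiset.card (z' - z ∩ z'))

/-- `N` is a catenary bound for `a`: any two factorizations of `a` can be joined by a chain of
factorizations of `a` whose consecutive distances are at most `N`. -/
def IsCatenaryBound {H : Type*} [CancelCommMonoid H] (a : H) (N : ℕ) : Prop :=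
  ∀ z ∈ factorizationsOf a, ∀ z' ∈ factorizationsOf a,
    ∃ (s : ℕ) (c : Fin (s + 1) → Multiset H),
      c 0 = z ∧ c (Fin.last s) = z' ∧ (∀ i, c i ∈ factorizationsOf a) ∧
      ∀ i : Fin s, factorizationDist (c i.castSucc) (c i.succ) ≤ N

/-- The catenary degree `c(a) ∈ ℕ ∪ {∞}` of an element: the smallest catenary bound. -/
noncomputable def catenaryDegreeElem {H : Type*} [CancelCommMonoid H] (a : H) : ℕ∞ :=
  sInf {N : ℕ∞ | ∃ n : ℕ, N = (n : ℕ∞) ∧ IsCatenaryBound a n}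

/-- The catenary degree `c(H) = sup { c(a) : a ∈ H }`. -/
noncomputable def catenaryDegree (H : Type*) [CancelCommMonoid H] : ℕ∞ :=
  ⨆ a : H, catenaryDegreeElem a

namespace RCD
open Multiset

lemma card_succ {α : Type*} {s : Multiset α} {n : ℕ} (h : card s = n + 1) :
    ∃ a t, s = a ::ₘ t ∧ card t = n := by
  obtain ⟨a, ha⟩ := Multiset.card_pos_iff_exists_mem.1 (by omega : 0 < card s)
  obtain ⟨t, rfl⟩ := Multiset.exists_cons_of_mem ha
  exact ⟨a, t, rfl, by simpa using h⟩

abbrev A {r : ℕ} (k : Fin r → ℕ) := Σ i : Fin r, Fin (k i)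

def Rel {r : ℕ} {k : Fin r → ℕ} (s t : Multiset (A k)) : Prop :=
  ∃ c : Fin r → ℤ, ∑ i, c i = 0 ∧ ∀ p : A k, (s.count p : ℤ) = t.count p + c p.1

def Rd {r : ℕ} {k : Fin r → ℕ} (t : Multiset (A k)) : Prop :=
  ∀ i, ∃ j, (⟨i, j⟩ : A k) ∉ t

def row {r : ℕ} (k : Fin r → ℕ) (i : Fin r) : Multiset (A k) :=
  (Finset.univ : Finset (Fin (k i))).val.map (fun j => (⟨i, j⟩ : A k))

lemma Rel.eq_of_Rd {r : ℕ} {k : Fin r → ℕ} {s t : Multiset (A k)} (h : Rel s t) (ht : Rd t) :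
    s = t := by
  obtain ⟨c, hc, h⟩ := h
  have h0 : ∀ i, 0 ≤ c i := by
    intro i
    obtain ⟨j, hj⟩ := ht i
    have := h ⟨i, j⟩
    rw [Multiset.count_eq_zero_of_notMem hj] at this
    simp at this
    omega
  have h1 : ∀ i, c i = 0 := by
    intro i
    exact (Finset.sum_eq_zero_iff_of_nonneg (fun i _ => h0 i)).1 hc i (Finset.mem_univ i)
  ext p
  have := h p
  rw [h1] at this
  omega

lemma Rd_replicate {r : ℕ} {k : Fin r → ℕ} (hk2 : ∀ i, 2 ≤ k i) (n : ℕ) (x : A k) :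
    Rd (replicate n x) := by
  intro i
  have := hk2 i
  by_cases h : x = ⟨i, ⟨0, by omega⟩⟩
  · refine ⟨⟨1, by omega⟩, fun hm => ?_⟩
    have h2 := Multiset.eq_of_mem_replicate hm
    rw [h] at h2
    simp at h2
  · exact ⟨⟨0, by omega⟩, fun hm => h (Multiset.eq_of_mem_replicate hm).symm⟩

lemma Rd_zero {r : ℕ} {k : Fin r → ℕ} (hk2 : ∀ i, 2 ≤ k i) : Rd (0 : Multiset (A k)) := by
  intro i
  have := hk2 i
  exact ⟨⟨0, by omega⟩, by simp⟩

lemma Rd_singleton {r : ℕ} {k : Fin r → ℕ} (hk2 : ∀ i, 2 ≤ k i) (x : A k) :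
    Rd ({x} : Multiset (A k)) := Rd_replicate hk2 1 x

lemma card_row {r : ℕ} (k : Fin r → ℕ) (i : Fin r) : card (row k i) = k i := by
  simp [row]

lemma mem_row {r : ℕ} (k : Fin r → ℕ) (i : Fin r) (p : A k) : p ∈ row k i ↔ p.1 = i := by
  obtain ⟨a, b⟩ := p
  simp only [row, Multiset.mem_map]
  constructor
  · rintro ⟨j, -, h⟩
    cases h; rfl
  · rintro h
    subst h
    exact ⟨b, by simp, rfl⟩

lemma nodup_row {r : ℕ} (k : Fin r → ℕ) (i : Fin r) : (row k i).Nodup := by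
  refine Multiset.Nodup.map ?_ Finset.univ.nodup
  intro a b h
  simpa using h

lemma count_row {r : ℕ} (k : Fin r → ℕ) (i : Fin r) (p : A k) :
    count p (row k i) = if p.1 = i then 1 else 0 := by
  rw [Multiset.count_eq_of_nodup (nodup_row k i)]
  simp [mem_row]

lemma count_bind_row {r : ℕ} (k : Fin r → ℕ) (D : Multiset (Fin r)) (p : A k) :
    count p (D.bind (row k)) = count p.1 D := by
  induction D using Multiset.induction_on with
  | empty => simp
  | cons a s ih => 
    rw [Multiset.cons_bind, Multiset.count_add, ih, count_row, Multiset.count_cons]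
    omega

lemma card_bind_row {r : ℕ} (k : Fin r → ℕ) (D : Multiset (Fin r)) :
    card (D.bind (row k)) = (D.map k).sum := by
  rw [Multiset.card_bind]
  congr 1
  exact Multiset.map_congr rfl (fun i _ => card_row k i)

lemma Rel_bind {r : ℕ} {k : Fin r → ℕ} (e : Multiset (A k)) (D D' : Multiset (Fin r))
    (h : card D = card D') : Rel (e + D.bind (row k)) (e + D'.bind (row k)) := by
  refine ⟨fun i => count i D - count i D', ?_, ?_⟩
  · rw [Finset.sum_sub_distrib, ← Nat.cast_sum, ← Nat.cast_sum]
    simp [Multiset.sum_count_eq_card, h]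
  · intro p
    simp only [Multiset.count_add, count_bind_row]
    push_cast
    ring

lemma exists_bind_of_Rel {r : ℕ} {k : Fin r → ℕ} {t e : Multiset (A k)} (he : Rd e)
    (D : Multiset (Fin r)) (h : Rel t (e + D.bind (row k))) :
    ∃ D' : Multiset (Fin r), card D' = card D ∧ t = e + D'.bind (row k) := by
  obtain ⟨c, hc, h⟩ := h
  have h0 : ∀ i, 0 ≤ count i D + c i := by
    intro i
    obtain ⟨j, hj⟩ := he i
    have := h ⟨i, j⟩
    rw [Multiset.count_add, count_bind_row, Multiset.count_eq_zero_of_notMem hj] at this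
    simp at this
    omega
  let d : Fin r →₀ ℕ := Finsupp.equivFunOnFinite.symm (fun i => (count i D + c i).toNat)
  have hd : ∀ i, count i (Finsupp.toMultiset d) = (count i D + c i).toNat := by
    intro i
    rw [Finsupp.count_toMultiset]; rfl
  refine ⟨Finsupp.toMultiset d, ?_, ?_⟩
  · have h1 : ∑ i, count i (Finsupp.toMultiset d) = card (Finsupp.toMultiset d) := 
      Multiset.sum_count_eq_card (by simp)
    have h2 : ∑ i, count i D = card D := Multiset.sum_count_eq_card (by simp)
    zify
    rw [← h1, ← h2]
    push_cast
    simp only [hd, Int.toNat_of_nonneg (h0 _)]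
    rw [Finset.sum_add_distrib, hc, add_zero]
  · ext p
    rw [Multiset.count_add, count_bind_row, hd]
    have := h p
    rw [Multiset.count_add, count_bind_row] at this
    have := h0 p.1
    push_cast at *
    omega

lemma exists_normal {r : ℕ} {k : Fin r → ℕ} (hk2 : ∀ i, 2 ≤ k i) (s : Multiset (A k)) :
    ∃ e D, Rd e ∧ s = e + Multiset.bind D (row k) := by
  induction hn : card s using Nat.strong_induction_on generalizing s with
  | _ n ih =>
  by_cases h : Rd s
  · exact ⟨s, 0, h, by simp⟩
  · unfold Rd at h
    push Not at h
    obtain ⟨i, hi⟩ := h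
    have hle : row k i ≤ s := by
      rw [Multiset.le_iff_subset (nodup_row k i)]
      intro p hp
      rw [mem_row] at hp
      subst hp
      exact hi p.2
    obtain ⟨s', rfl⟩ := Multiset.le_iff_exists_add.1 hle
    have hk := hk2 i
    obtain ⟨e, D, he, hs⟩ := ih (card s') (by rw [← hn, Multiset.card_add, card_row]; omega) s' rfl
    refine ⟨e, i ::ₘ D, he, ?_⟩
    rw [Multiset.cons_bind, hs]
    abel

lemma mem_nfold {r : ℕ} (k : Fin r → ℕ) (n x : ℕ) : x ∈ nfoldSumset (Set.range k) n ↔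
    ∃ D : Multiset (Fin r), card D = n ∧ (D.map k).sum = x := by
  induction n generalizing x with
  | zero => 
    simp [nfoldSumset, eq_comm]
  | succ n ih =>
    simp only [nfoldSumset, Set.mem_add, Set.mem_range, ih]
    constructor
    · rintro ⟨_, ⟨i, rfl⟩, _, ⟨D, hD, rfl⟩, rfl⟩
      exact ⟨i ::ₘ D, by simp [hD], by simp⟩
    · rintro ⟨D, hD, rfl⟩
      obtain ⟨i, D, rfl, h⟩ := card_succ hD
      exact ⟨_, ⟨i, rfl⟩, _, ⟨D, h, rfl⟩, by simp⟩

lemma dist_add_le {H : Type*} (X P Q : Multiset H) :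
    factorizationDist (X + P) (X + Q) ≤ max (card P) (card Q) := by
  unfold factorizationDist
  let _ := Classical.decEq H
  have h : X ≤ (X + P) ∩ (X + Q) := 
    Multiset.le_inter (Multiset.le_add_right _ _) (Multiset.le_add_right _ _)
  have hc := Multiset.card_le_card h
  apply max_le_max
  · rw [Multiset.card_sub Multiset.inter_le_left, Multiset.card_add]
    omega
  · rw [Multiset.card_sub Multiset.inter_le_right, Multiset.card_add]
    omega

lemma dist_self {H : Type*} (X : Multiset H) : factorizationDist X X = 0 := by
  have := dist_add_le X 0 0
  simpa using this

lemma le_dist {H : Type*} (P Q : Multiset H) (h : ∀ x ∈ P, x ∉ Q) :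
    card P ≤ factorizationDist P Q := by
  unfold factorizationDist
  let _ := Classical.decEq H
  have : P ∩ Q = 0 := by
    rw [Multiset.eq_zero_iff_forall_notMem]
    intro x hx
    rw [Multiset.mem_inter] at hx
    exact h x hx.1 hx.2
  refine le_trans ?_ (le_max_left _ _)
  exact (by rw [this]; simp : card P ≤ card (P - P ∩ Q))

def Step {H : Type*} [CancelCommMonoid H] (a : H) (N : ℕ) (z z' : Multiset H) : Prop :=
  z ∈ factorizationsOf a ∧ z' ∈ factorizationsOf a ∧ factorizationDist z z' ≤ N

lemma chain_of_rtg {H : Type*} [CancelCommMonoid H] (a : H) (N : ℕ) (z z' : Multiset H)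
    (hz : z ∈ factorizationsOf a)
    (h : Relation.ReflTransGen (Step a N) z z') :
    ∃ (s : ℕ) (c : Fin (s + 1) → Multiset H),
      c 0 = z ∧ c (Fin.last s) = z' ∧ (∀ i, c i ∈ factorizationsOf a) ∧
      ∀ i : Fin s, factorizationDist (c i.castSucc) (c i.succ) ≤ N := by
  induction h with
  | refl => exact ⟨0, fun _ => z, rfl, rfl, fun _ => hz, fun i => i.elim0⟩
  | @tail b c' hab hbc ih =>
    obtain ⟨s, c, h0, h1, h2, h3⟩ := ih
    refine ⟨s + 1, Fin.snoc (α := fun _ => Multiset H) c c', ?_, ?_, ?_, ?_⟩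
    · rw [← Fin.castSucc_zero, Fin.snoc_castSucc (α := fun _ => Multiset H), h0]
    · rw [Fin.snoc_last (α := fun _ => Multiset H)]
    · intro i
      refine Fin.lastCases ?_ (fun i => ?_) i
      · rw [Fin.snoc_last (α := fun _ => Multiset H)]; exact hbc.2.1
      · rw [Fin.snoc_castSucc (α := fun _ => Multiset H)]; exact h2 i
    · intro i
      refine Fin.lastCases ?_ (fun i => ?_) i
      · rw [Fin.snoc_castSucc (α := fun _ => Multiset H), Fin.succ_last,
          Fin.snoc_last (α := fun _ => Multiset H), h1]
        exact hbc.2.2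
      · rw [Fin.snoc_castSucc (α := fun _ => Multiset H), Fin.succ_castSucc,
          Fin.snoc_castSucc (α := fun _ => Multiset H)]
        exact h3 i

lemma leave {α : Type*} (s : ℕ) (c : Fin (s + 1) → α) (x y : α) (h0 : c 0 = x)
    (h1 : c (Fin.last s) = y) (hxy : x ≠ y) :
    ∃ i : Fin s, c i.castSucc = x ∧ c i.succ ≠ x := by
  by_contra! hcon
  apply hxy
  rw [← h1]
  symm
  refine Fin.induction (motive := fun i => c i = x) h0 (fun i hi => hcon i hi) (Fin.last s)

structure Good {r : ℕ} {k : Fin r → ℕ} {H : Type} [CancelCommMonoid H] (u : A k → H) : Prop where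
  hk2 : ∀ i, 2 ≤ k i
  gen : ∀ a : H, ∃ s : Multiset (A k), (s.map u).prod = a
  rel : ∀ s t : Multiset (A k), (s.map u).prod = (t.map u).prod ↔ Rel s t

section
variable {r : ℕ} {k : Fin r → ℕ} {H : Type} [CancelCommMonoid H] {u : A k → H}

lemma Good.eq (g : Good u) {s t : Multiset (A k)} (h : (s.map u).prod = (t.map u).prod)
    (ht : Rd t) : s = t := ((g.rel s t).1 h).eq_of_Rd ht

lemma Good.reduced (g : Good u) : MonoidReduced H := by
  intro a ha
  obtain ⟨b, hb⟩ := ha.exists_right_inv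
  obtain ⟨s, rfl⟩ := g.gen a
  obtain ⟨t, rfl⟩ := g.gen b
  have : s + t = 0 := g.eq (by simpa using hb) (Rd_zero g.hk2)
  have hs : s = 0 := by
    have := (add_eq_zero.1 this).1
    exact this
  simp [hs]

lemma Good.inj (g : Good u) : Function.Injective u := by
  intro x y h
  have := g.eq (s := {x}) (t := {y}) (by simpa using h) (Rd_singleton g.hk2 y)
  simpa using this

lemma Good.irr (g : Good u) (x : A k) : Irreducible (u x) := by
  refine ⟨fun h => ?_, fun a b h => ?_⟩
  · have h1 := g.reduced _ h
    have := g.eq (s := {x}) (t := 0) (by simpa using h1) (Rd_zero g.hk2)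
    simp at this
  · obtain ⟨s, rfl⟩ := g.gen a
    obtain ⟨t, rfl⟩ := g.gen b
    have : s + t = {x} := g.eq (by simpa using h.symm) (Rd_singleton g.hk2 x)
    have hc := congrArg card this
    rw [Multiset.card_add, Multiset.card_singleton] at hc
    have : card s = 0 ∨ card t = 0 := by omega
    rcases this with h | h
    · left; rw [Multiset.card_eq_zero.1 h]; simp
    · right; rw [Multiset.card_eq_zero.1 h]; simp

lemma Good.irr_iff (g : Good u) (a : H) : Irreducible a ↔ ∃ x, a = u x := by
  constructor
  · intro h
    obtain ⟨s, rfl⟩ := g.gen a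
    rcases Multiset.empty_or_exists_mem s with rfl | ⟨x, hx⟩
    · exact absurd h (by simp)
    · obtain ⟨s', rfl⟩ := Multiset.exists_cons_of_mem hx
      refine ⟨x, ?_⟩
      rw [Multiset.map_cons, Multiset.prod_cons] at h ⊢
      rcases h.isUnit_or_isUnit rfl with h1 | h1
      · exact absurd h1 (g.irr x).not_isUnit
      · rw [g.reduced _ h1, mul_one]
  · rintro ⟨x, rfl⟩
    exact g.irr x

lemma Good.lift (g : Good u) (z : Multiset H) (hz : ∀ x ∈ z, Irreducible x) :
    ∃ s : Multiset (A k), z = s.map u := by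
  induction z using Multiset.induction_on with
  | empty => exact ⟨0, by simp⟩
  | cons a z ih =>
    obtain ⟨s, rfl⟩ := ih (fun x hx => hz x (Multiset.mem_cons_of_mem hx))
    obtain ⟨x, rfl⟩ := (g.irr_iff a).1 (hz a (Multiset.mem_cons_self _ _))
    exact ⟨x ::ₘ s, by simp⟩

lemma Good.mem_fac (g : Good u) (a : H) (z : Multiset H) :
    z ∈ factorizationsOf a ↔ ∃ s : Multiset (A k), z = s.map u ∧ (s.map u).prod = a := by
  constructor
  · rintro ⟨h1, h2⟩
    obtain ⟨s, rfl⟩ := g.lift z h1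
    exact ⟨s, rfl, h2⟩
  · rintro ⟨s, rfl, h⟩
    refine ⟨fun x hx => ?_, h⟩
    obtain ⟨y, -, rfl⟩ := Multiset.mem_map.1 hx
    exact g.irr y

lemma Good.atomic (g : Good u) : MonoidAtomic H := by
  intro a _
  obtain ⟨s, hs⟩ := g.gen a
  exact ⟨s.map u, (g.mem_fac a _).2 ⟨s, rfl, hs⟩⟩

lemma Good.mem_lengths (g : Good u) (a : H) (n : ℕ) :
    n ∈ setOfLengths a ↔ ∃ s : Multiset (A k), card s = n ∧ (s.map u).prod = a := by
  constructor
  · rintro (⟨rfl, h⟩ | ⟨-, l, hl, h⟩)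
    · exact ⟨0, rfl, by simp [g.reduced _ h]⟩
    · obtain ⟨s, rfl, hs⟩ := (g.mem_fac a l).1 h
      exact ⟨s, by simpa using hl, hs⟩
  · rintro ⟨s, rfl, hs⟩
    by_cases h : card s = 0
    · left
      refine ⟨h, ?_⟩
      rw [← hs, Multiset.card_eq_zero.1 h]
      simp
    · right
      exact ⟨by omega, s.map u, by simp, (g.mem_fac a _).2 ⟨s, rfl, hs⟩⟩

lemma Good.prod_eq_iff (g : Good u) {e : Multiset (A k)} (he : Rd e) (D : Multiset (Fin r))
    (t : Multiset (A k)) : (t.map u).prod = ((e + D.bind (row k)).map u).prod ↔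
      ∃ D' : Multiset (Fin r), card D' = card D ∧ t = e + D'.bind (row k) := by
  rw [g.rel]
  constructor
  · exact exists_bind_of_Rel he D
  · rintro ⟨D', h, rfl⟩
    exact Rel_bind e D' D h

lemma Good.lengths (g : Good u) {e : Multiset (A k)} (he : Rd e) (D : Multiset (Fin r)) :
    setOfLengths (((e + D.bind (row k)).map u).prod) =
      ({card e} : Set ℕ) + nfoldSumset (Set.range k) (card D) := by
  ext n
  rw [g.mem_lengths]
  simp only [g.prod_eq_iff he, Set.singleton_add, Set.mem_image, mem_nfold]
  constructor
  · rintro ⟨s, rfl, D', h, rfl⟩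
    exact ⟨_, ⟨D', h, rfl⟩, by rw [Multiset.card_add, card_bind_row]⟩
  · rintro ⟨_, ⟨D', h, rfl⟩, rfl⟩
    exact ⟨_, by rw [Multiset.card_add, card_bind_row], D', h, rfl⟩

lemma Good.system (g : Good u) (hr : 1 ≤ r) : systemOfLengths H =
    {({0} : Set ℕ), {1}} ∪ {S | ∃ y n : ℕ, S = ({y} : Set ℕ) + nfoldSumset (Set.range k) n} := by
  have key : ∀ y n : ℕ, ({y} : Set ℕ) + nfoldSumset (Set.range k) n ∈ systemOfLengths H := by
    intro y n
    have := g.hk2 ⟨0, hr⟩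
    have h := g.lengths (Rd_replicate g.hk2 y ⟨⟨0, hr⟩, ⟨0, by omega⟩⟩)
      (replicate n (⟨0, hr⟩ : Fin r))
    rw [Multiset.card_replicate, Multiset.card_replicate] at h
    exact ⟨_, h⟩
  ext S
  constructor
  · rintro ⟨a, rfl⟩
    right
    obtain ⟨s, rfl⟩ := g.gen a
    obtain ⟨e, D, he, rfl⟩ := exists_normal g.hk2 s
    exact ⟨_, _, g.lengths he D⟩
  · rintro ((rfl | rfl) | ⟨y, n, rfl⟩)
    · simpa [nfoldSumset] using key 0 0
    · simpa [nfoldSumset] using key 1 0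
    · exact key y n

lemma Good.rtg (g : Good u) {e : Multiset (A k)} (he : Rd e) (D₀ : Multiset (Fin r)) (N : ℕ)
    (hN : ∀ i j : Fin r, i = j ∨ max (k i) (k j) ≤ N) (n : ℕ) :
    ∀ D D' E : Multiset (Fin r), card D = n → card D' = n → card (D + E) = card D₀ →
    Relation.ReflTransGen (Step (((e + D₀.bind (row k)).map u).prod) N)
      ((e + (D + E).bind (row k)).map u) ((e + (D' + E).bind (row k)).map u) := by
  induction n with
  | zero =>
    intro D D' E h h' _
    rw [Multiset.card_eq_zero.1 h, Multiset.card_eq_zero.1 h']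
  | succ n ih =>
    intro D D' E h h' hE
    obtain ⟨i, D, rfl, hD⟩ := card_succ h
    obtain ⟨j, D', rfl, hD'⟩ := card_succ h'
    have hE2 : card (D + j ::ₘ E) = card D₀ := by
      rw [← hE]; simp
    have h2 := ih D D' (j ::ₘ E) hD hD' hE2
    have hE3 : j ::ₘ D' + E = D' + j ::ₘ E := by simp
    rw [hE3]
    refine Relation.ReflTransGen.head ⟨?_, ?_, ?_⟩ h2
    · exact (g.mem_fac _ _).2 ⟨_, rfl, (g.prod_eq_iff he _ _).2 ⟨_, hE, rfl⟩⟩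
    · exact (g.mem_fac _ _).2 ⟨_, rfl, (g.prod_eq_iff he _ _).2 ⟨_, hE2, rfl⟩⟩
    · have e1 : (e + (i ::ₘ D + E).bind (row k)).map u
          = (e + (D + E).bind (row k)).map u + (row k i).map u := by
        rw [← Multiset.map_add, Multiset.cons_add, Multiset.cons_bind]
        congr 1; abel
      have e2 : (e + (D + j ::ₘ E).bind (row k)).map u
          = (e + (D + E).bind (row k)).map u + (row k j).map u := by
        rw [← Multiset.map_add, Multiset.add_cons, Multiset.cons_bind]
        congr 1; abel
      rw [e1, e2]
      rcases hN i j with rfl | h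
      · rw [dist_self]; exact Nat.zero_le _
      · refine (dist_add_le _ _ _).trans ?_
        simpa [card_row] using h

lemma Good.bound (g : Good u) (N : ℕ)
    (hN : ∀ i j : Fin r, i = j ∨ max (k i) (k j) ≤ N) (a : H) : IsCatenaryBound a N := by
  obtain ⟨s, rfl⟩ := g.gen a
  obtain ⟨e, D, he, rfl⟩ := exists_normal g.hk2 s
  intro z hz z' hz'
  apply chain_of_rtg _ _ _ _ hz
  obtain ⟨s, rfl, hs⟩ := (g.mem_fac _ _).1 hz
  obtain ⟨s', rfl, hs'⟩ := (g.mem_fac _ _).1 hz'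
  obtain ⟨D1, h1, rfl⟩ := (g.prod_eq_iff he _ _).1 hs
  obtain ⟨D2, h2, rfl⟩ := (g.prod_eq_iff he _ _).1 hs'
  have := g.rtg he D N hN (card D) D1 D2 0 h1 h2 (by simpa using h1)
  simpa using this

lemma Good.cat_le (g : Good u) (N : ℕ)
    (hN : ∀ i j : Fin r, i = j ∨ max (k i) (k j) ≤ N) : catenaryDegree H ≤ N := by
  refine iSup_le fun a => sInf_le ⟨N, rfl, g.bound N hN a⟩

lemma Good.le_cat (g : Good u) (i j : Fin r) (hij : i ≠ j) : (k i : ℕ∞) ≤ catenaryDegree H := by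
  refine le_trans ?_ (le_iSup _ ((row k i).map u).prod)
  refine le_sInf ?_
  rintro _ ⟨n, rfl, hn⟩
  have hrow : ∀ i, row k i = 0 + ({i} : Multiset (Fin r)).bind (row k) := by simp
  have hz : ∀ t : Multiset (A k), (t.map u).prod = ((row k i).map u).prod ↔
      ∃ l, t = row k l := by
    intro t
    rw [hrow, g.prod_eq_iff (Rd_zero g.hk2)]
    constructor
    · rintro ⟨D', h, rfl⟩
      obtain ⟨l, rfl⟩ := Multiset.card_eq_one.1 h
      exact ⟨l, (hrow l).symm⟩
    · rintro ⟨l, rfl⟩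
      exact ⟨{l}, by simp, hrow l⟩
  obtain ⟨s, c, h0, h1, h2, h3⟩ := hn ((row k i).map u) ((g.mem_fac _ _).2 ⟨_, rfl, rfl⟩)
    ((row k j).map u) ((g.mem_fac _ _).2 ⟨_, rfl, (hz _).2 ⟨j, rfl⟩⟩)
  have hdisj : ∀ l, i ≠ l → ∀ x ∈ (row k i).map u, x ∉ (row k l).map u := by
    intro l hl x hx hx'
    obtain ⟨p, hp, rfl⟩ := Multiset.mem_map.1 hx
    obtain ⟨q, hq, h⟩ := Multiset.mem_map.1 hx'
    have := g.inj h
    subst this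
    rw [mem_row] at hp hq
    exact hl (hp.symm.trans hq)
  have hne : (row k i).map u ≠ (row k j).map u := by
    intro h
    have hk := g.hk2 i
    have hm : u ⟨i, ⟨0, by omega⟩⟩ ∈ (row k i).map u :=
      Multiset.mem_map_of_mem _ ((mem_row _ _ _).2 rfl)
    exact hdisj j hij _ hm (h ▸ hm)
  obtain ⟨m, hm1, hm2⟩ := leave s c _ _ h0 h1 hne
  have h4 := h3 m
  obtain ⟨t, ht, ht'⟩ := (g.mem_fac _ _).1 (h2 m.succ)
  obtain ⟨l, rfl⟩ := (hz t).1 ht'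
  have hil : i ≠ l := by
    rintro rfl
    exact hm2 ht
  rw [hm1, ht] at h4
  have h5 := (le_dist _ _ (hdisj l hil)).trans h4
  rw [Multiset.card_map, card_row] at h5
  exact_mod_cast h5

lemma Good.fg (g : Good u) : Monoid.FG H := by
  rw [Monoid.fg_iff]
  refine ⟨Set.range u, ?_, Set.finite_range u⟩
  rw [eq_top_iff]
  intro a _
  obtain ⟨s, rfl⟩ := g.gen a
  refine Submonoid.multiset_prod_mem _ _ ?_
  intro x hx
  obtain ⟨p, -, rfl⟩ := Multiset.mem_map.1 hx
  exact Submonoid.subset_closure ⟨p, rfl⟩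

end

def phi {r : ℕ} (k : Fin r → ℕ) (o : (i : Fin r) → Fin (k i)) :
    Multiset (A k) →+ ((A k → ℤ) × ℤ) where
  toFun s := (fun p => (count p s : ℤ) - count ⟨p.1, o p.1⟩ s, ∑ i, (count ⟨i, o i⟩ s : ℤ))
  map_zero' := by ext <;> simp
  map_add' s t := by
    ext
    · simp; ring
    · simp [Finset.sum_add_distrib]

lemma phi_eq_iff {r : ℕ} (k : Fin r → ℕ) (o : (i : Fin r) → Fin (k i)) (s t : Multiset (A k)) :
    phi k o s = phi k o t ↔ Rel s t := by
  simp only [phi, AddMonoidHom.coe_mk, ZeroHom.coe_mk, Prod.mk.injEq]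
  constructor
  · rintro ⟨h1, h2⟩
    refine ⟨fun i => (count ⟨i, o i⟩ s : ℤ) - count ⟨i, o i⟩ t, ?_, ?_⟩
    · rw [Finset.sum_sub_distrib, h2, sub_self]
    · intro p
      have := congrFun h1 p
      linarith
  · rintro ⟨c, hc, h⟩
    constructor
    · funext p
      have h1 := h p
      have h2 := h ⟨p.1, o p.1⟩
      simp only at h2
      linarith
    · simp only [h, Finset.sum_add_distrib, hc, add_zero]

abbrev HM {r : ℕ} (k : Fin r → ℕ) (o : (i : Fin r) → Fin (k i)) : Type :=
  Multiplicative (AddMonoidHom.mrange (phi k o))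

noncomputable instance {r : ℕ} (k : Fin r → ℕ) (o : (i : Fin r) → Fin (k i)) :
    CancelCommMonoid (HM k o) :=
  { (inferInstance : CommMonoid (HM k o)) with
    mul_left_cancel := by
      intro a b c h
      have h1 : (Multiplicative.toAdd a).1 + (Multiplicative.toAdd b).1
          = (Multiplicative.toAdd a).1 + (Multiplicative.toAdd c).1 :=
        congrArg (fun x : HM k o => (Multiplicative.toAdd x).1) h
      apply Multiplicative.toAdd.injective
      exact Subtype.ext (add_left_cancel h1) }

def uu {r : ℕ} (k : Fin r → ℕ) (o : (i : Fin r) → Fin (k i)) (x : A k) : HM k o :=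
  Multiplicative.ofAdd ⟨phi k o {x}, ⟨{x}, rfl⟩⟩

lemma prod_uu {r : ℕ} (k : Fin r → ℕ) (o : (i : Fin r) → Fin (k i)) (s : Multiset (A k)) :
    (s.map (uu k o)).prod = Multiplicative.ofAdd ⟨phi k o s, ⟨s, rfl⟩⟩ := by
  induction s using Multiset.induction_on with
  | empty => 
    rw [Multiset.map_zero, Multiset.prod_zero]
    apply Multiplicative.toAdd.injective
    exact Subtype.ext (_root_.map_zero (phi k o)).symm
  | cons a s ih =>
    rw [Multiset.map_cons, Multiset.prod_cons, ih, uu, ← ofAdd_add]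
    congr 1
    apply Subtype.ext
    exact (_root_.map_add (phi k o) {a} s).symm

lemma good_uu {r : ℕ} (k : Fin r → ℕ) (o : (i : Fin r) → Fin (k i)) (hk2 : ∀ i, 2 ≤ k i) :
    Good (uu k o) where
  hk2 := hk2
  gen a := by
    obtain ⟨s, hs⟩ := (Multiplicative.toAdd a).2
    refine ⟨s, ?_⟩
    rw [prod_uu]
    apply Multiplicative.toAdd.injective
    exact Subtype.ext hs
  rel s t := by
    rw [prod_uu, prod_uu, ← phi_eq_iff k o, Multiplicative.ofAdd.injective.eq_iff]
    exact Subtype.ext_iff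

end RCD

/-- For `r ≥ 1` and `L = {k₁, …, k_r}` with `2 ≤ k₁ < … < k_r`, there is a reduced, finitely
generated, atomic, commutative cancellative monoid `H` with atoms `u i j` satisfying
`u_{1,1}⋯u_{1,k₁} = … = u_{r,1}⋯u_{r,k_r}`,
`𝓛(H) = {{0}, {1}} ∪ { y + nL : y, n ∈ ℕ }`, whose catenary degree is `0` if `r = 1` and
`k_r` if `r ≥ 2`. -/
theorem realization_with_catenary_degree
    (r : ℕ) (hr : 1 ≤ r) (k : Fin r → ℕ) (hk2 : ∀ i, 2 ≤ k i)
    (hkmono : StrictMono k) (L : Set ℕ) (hL : L = Set.range k) :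
    ∃ (H : Type) (_ : CancelCommMonoid H) (u : (i : Fin r) → Fin (k i) → H),
      MonoidReduced H ∧ Monoid.FG H ∧ MonoidAtomic H ∧
      Function.Injective (fun p : Σ i : Fin r, Fin (k i) => u p.1 p.2) ∧
      {a : H | Irreducible a} = {a : H | ∃ i j, a = u i j} ∧
      (∀ i : Fin r, (∏ j : Fin (k i), u i j) = ∏ j : Fin (k ⟨0, hr⟩), u ⟨0, hr⟩ j) ∧
      systemOfLengths H =
        {({0} : Set ℕ), {1}} ∪ {S | ∃ y n : ℕ, S = ({y} : Set ℕ) + nfoldSumset L n} ∧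
      (r = 1 → catenaryDegree H = 0) ∧
      (2 ≤ r → catenaryDegree H = (k ⟨r - 1, by omega⟩ : ℕ∞)) := by

  subst hL
  let o : (i : Fin r) → Fin (k i) := fun i => ⟨0, by have := hk2 i; omega⟩
  have g := RCD.good_uu k o hk2
  refine ⟨RCD.HM k o, inferInstance, fun i j => RCD.uu k o ⟨i, j⟩, g.reduced, g.fg, g.atomic,
    g.inj, ?_, ?_, g.system hr, ?_, ?_⟩
  · ext a
    simp only [Set.mem_ofPred_eq, g.irr_iff]
    constructor
    · rintro ⟨⟨i, j⟩, h⟩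
      exact ⟨i, j, h⟩
    · rintro ⟨i, j, h⟩
      exact ⟨⟨i, j⟩, h⟩
  · intro i
    have hp : ∀ i : Fin r, (∏ j : Fin (k i), RCD.uu k o ⟨i, j⟩)
        = ((RCD.row k i).map (RCD.uu k o)).prod := by
      intro i
      rw [RCD.row, Multiset.map_map]
      rfl
    change (∏ j : Fin (k i), RCD.uu k o ⟨i, j⟩) = ∏ j, RCD.uu k o ⟨⟨0, hr⟩, j⟩
    rw [hp, hp, g.rel]
    have := RCD.Rel_bind (k := k) 0 {i} {⟨0, hr⟩} (by simp)
    simpa using this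
  · intro h1
    have := g.cat_le 0 (fun i j => Or.inl (by ext; omega))
    simpa using this
  · intro h2
    apply le_antisymm
    · refine g.cat_le _ (fun i j => Or.inr (max_le ?_ ?_))
      · exact hkmono.monotone (by rw [Fin.le_def]; simp only; omega)
      · exact hkmono.monotone (by rw [Fin.le_def]; simp only; omega)
    · refine g.le_cat _ ⟨0, hr⟩ ?_
      intro h
      rw [Fin.mk.injEq] at h
      omega
end

section
/- Let H be an atomic commutative cancellative monoid whose associated reduced monoid H/H^× is finitely generated. If 𝓛(H) is additively closed (i.e., L₁ + L₂ ∈ 𝓛(H) for all L₁, L₂ ∈ 𝓛(H)), then 𝓛(H) is a finitely generated semigroup under sumset addition: there exist finitely many sets L₁, …, L_m ∈ 𝓛(H) such that every member of 𝓛(H) is a finite sum of sets from {L₁, …, L_m} (together with the identity element {0}). -/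
open Pointwise

theorem wqo_antitone {Q : Type*} [PartialOrder Q] [WellQuasiOrderedLE Q] (F : ℕ → ℕ → Q)
    (hF : ∀ i, Antitone (F i)) : ∃ i j, i < j ∧ ∀ k, F i k ≤ F j k := by
  have hstab : ∀ i, ∃ s, ∀ k, F i s ≤ F i k := by
    intro i
    have hwf : WellFounded ((· < ·) : Q → Q → Prop) := wellFounded_lt
    obtain ⟨_, ⟨s, rfl⟩, hs⟩ := hwf.has_min (Set.range (F i)) ⟨_, 0, rfl⟩
    refine ⟨s, fun k => ?_⟩
    have h1 : F i (max s k) ≤ F i s := hF i (le_max_left _ _)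
    have h2 : F i (max s k) ≤ F i k := hF i (le_max_right _ _)
    rcases h1.lt_or_eq with h | h
    · exact absurd h (hs _ ⟨_, rfl⟩)
    · exact h ▸ h2
  choose s hs using hstab
  have hig : WellQuasiOrdered (List.SublistForall₂ ((· ≤ ·) : Q → Q → Prop)) := by
    have h := Set.PartiallyWellOrderedOn.partiallyWellOrderedOn_sublistForall₂
      ((· ≤ ·) : Q → Q → Prop) (s := Set.univ)
      (Set.partiallyWellOrderedOn_univ_iff.2 wellQuasiOrdered_le)
    simpa [Set.partiallyWellOrderedOn_univ_iff] using h
  have : IsPreorder (List Q) (List.SublistForall₂ ((· ≤ ·) : Q → Q → Prop)) := {}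
  obtain ⟨i, j, hij, h1, h2⟩ := (hig.prod (wellQuasiOrdered_le (α := Q)))
    (fun i => ((List.range (s i)).map (F i), F i (s i)))
  refine ⟨i, j, hij, fun k => ?_⟩
  by_cases hk : k < s i
  · obtain ⟨l, hl1, hl2⟩ := List.sublistForall₂_iff.1 h1
    obtain ⟨f, hf⟩ := List.sublist_iff_exists_orderEmbedding_getElem?_eq.1 hl2
    have hlen := hl1.length_eq
    simp only [List.length_map, List.length_range] at hlen
    have hkl : k < l.length := hlen ▸ hk
    have h3 := hl1.get (by simpa using hk) hkl
    have h4 := hf k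
    rw [List.getElem?_eq_getElem hkl] at h4
    have h5 := (List.getElem?_eq_some_iff.1 h4.symm)
    obtain ⟨h6, h7⟩ := h5
    simp only [List.getElem_map, List.getElem_range, List.get_eq_getElem] at h3 h7
    rw [← h7] at h3
    exact h3.trans (hF j (f.strictMono.le_apply))
  · exact ((hF i (not_lt.1 hk)).trans h2).trans (hs j k)

theorem wqo_upper_prod {α : Type*} [PartialOrder α] [WellQuasiOrderedLE (UpperSet α)] :
    WellQuasiOrderedLE (UpperSet (ℕ × α)) := by
  refine ⟨fun I => ?_⟩
  let F : ℕ → ℕ → UpperSet α := fun i k =>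
    ⟨{x | (k, x) ∈ I i}, fun x y hxy hx => (I i).upper (Prod.mk_le_mk.2 ⟨le_rfl, hxy⟩) hx⟩
  obtain ⟨i, j, hij, h⟩ := wqo_antitone F (fun i k l hkl x hx =>
    (I i).upper (Prod.mk_le_mk.2 ⟨hkl, le_rfl⟩) hx)
  exact ⟨i, j, hij, fun ⟨k, x⟩ hx => h k hx⟩

theorem wqo_upper_pi (n : ℕ) : WellQuasiOrderedLE (UpperSet (Fin n → ℕ)) := by
  induction n with
  | zero =>
    have : Finite (UpperSet (Fin 0 → ℕ)) :=
      Finite.of_injective (fun s : UpperSet (Fin 0 → ℕ) => (s : Set (Fin 0 → ℕ)))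
        SetLike.coe_injective
    exact Finite.to_wellQuasiOrderedLE
  | succ n ih =>
    have := wqo_upper_prod (α := Fin n → ℕ)
    exact (OrderIso.wellQuasiOrderedLE_iff
      (UpperSet.map (Fin.consOrderIso (n := n) (fun _ => ℕ)))).1 this

/-- Factorizations in the associated reduced monoid. -/
def IsFac {M : Type*} [CommMonoid M] (x : M) (m : Multiset M) : Prop :=
  (∀ u ∈ m, Irreducible u) ∧ m.prod = x

def lenSet {M : Type*} [CommMonoid M] (x : M) : Set ℕ := {k | ∃ m, IsFac x m ∧ Multiset.card m = k}

theorem assoc_irreducible_mk {H : Type*} [CancelCommMonoid H] {a : H} :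
    Irreducible (Associates.mk a) ↔ Irreducible a := by
  constructor
  · intro h
    refine ⟨fun hu => h.not_isUnit (Associates.isUnit_mk.2 hu), fun {x y} hxy => ?_⟩
    have := h.isUnit_or_isUnit (a := Associates.mk x) (b := Associates.mk y)
      (by rw [Associates.mk_mul_mk, hxy])
    simpa [Associates.isUnit_mk] using this
  · intro h
    refine ⟨fun hu => h.not_isUnit (Associates.isUnit_mk.1 hu), fun {x y} hxy => ?_⟩
    obtain ⟨b, rfl⟩ := Associates.mk_surjective x
    obtain ⟨c, rfl⟩ := Associates.mk_surjective y
    rw [Associates.mk_mul_mk, Associates.mk_eq_mk_iff_associated] at hxy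
    obtain ⟨u, hu⟩ := hxy.symm
    have h2 : Irreducible (b * c) := (irreducible_mul_units u).1 (hu.symm ▸ h)
    simpa [Associates.isUnit_mk] using h2.isUnit_or_isUnit rfl

theorem lenSet_mk {H : Type*} [CancelCommMonoid H] (a : H) :
    lenSet (Associates.mk a) = setOfLengths a := by
  ext k
  constructor
  · rintro ⟨m, ⟨hm, hp⟩, rfl⟩
    obtain ⟨l, rfl⟩ := Multiset.map_surjective_of_surjective Associates.mk_surjective m
    rw [Associates.prod_mk, Associates.mk_eq_mk_iff_associated] at hp
    have hl : ∀ x ∈ l, Irreducible x := fun x hx =>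
      assoc_irreducible_mk.1 (hm _ (Multiset.mem_map_of_mem _ hx))
    obtain ⟨u, hu⟩ := hp
    induction l using Multiset.induction with
    | empty => left; refine ⟨by simp, ?_⟩; rw [← hu]; simp
    | cons x l _ =>
      right
      refine ⟨by simp, (x * u) ::ₘ l, by simp, ?_, ?_⟩
      · intro y hy
        rcases Multiset.mem_cons.1 hy with rfl | hy
        · exact (irreducible_mul_units u).2 (hl x (by simp))
        · exact hl y (by simp [hy])
      · rw [← hu]; simp [mul_right_comm]
  · rintro (⟨rfl, h⟩ | ⟨_, l, rfl, hl, rfl⟩)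
    · exact ⟨0, ⟨by simp, by simpa using (Associates.mk_eq_one.2 h).symm⟩, rfl⟩
    · refine ⟨l.map Associates.mk, ⟨?_, Associates.prod_mk⟩, by simp⟩
      intro u hu
      obtain ⟨x, hx, rfl⟩ := Multiset.mem_map.1 hu
      exact assoc_irreducible_mk.2 (hl x hx)

theorem assoc_cancel {H : Type*} [CancelCommMonoid H] (x y z : Associates H)
    (h : x * y = x * z) : y = z := by
  obtain ⟨a, rfl⟩ := Associates.mk_surjective x
  obtain ⟨b, rfl⟩ := Associates.mk_surjective y
  obtain ⟨c, rfl⟩ := Associates.mk_surjective z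
  rw [Associates.mk_mul_mk, Associates.mk_mul_mk, Associates.mk_eq_mk_iff_associated] at h
  obtain ⟨u, hu⟩ := h
  rw [mul_assoc] at hu
  exact Associates.mk_eq_mk_iff_associated.2 ⟨u, mul_left_cancel hu⟩

theorem exists_fac {H : Type*} [CancelCommMonoid H] (hatomic : MonoidAtomic H)
    (x : Associates H) : ∃ m, IsFac x m := by
  obtain ⟨a, rfl⟩ := Associates.mk_surjective x
  by_cases ha : IsUnit a
  · exact ⟨0, by simp, by simpa using (Associates.mk_eq_one.2 ha).symm⟩
  · obtain ⟨l, hl, rfl⟩ := hatomic a ha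
    refine ⟨l.map Associates.mk, ?_, Associates.prod_mk⟩
    intro u hu
    obtain ⟨x, hx, rfl⟩ := Multiset.mem_map.1 hu
    exact assoc_irreducible_mk.2 (hl x hx)

theorem finite_atoms {H : Type*} [CancelCommMonoid H] (hfg : Monoid.FG (Associates H)) :
    {x : Associates H | Irreducible x}.Finite := by
  obtain ⟨S, hS⟩ := hfg
  refine S.finite_toSet.subset fun x hx => ?_
  have hmem : x ∈ Submonoid.closure (S : Set (Associates H)) := by rw [hS]; trivial
  have key : ∀ y ∈ Submonoid.closure (S : Set (Associates H)), Irreducible y → y ∈ S := by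
    intro y hy
    induction hy using Submonoid.closure_induction with
    | mem y hy => exact fun _ => hy
    | one => exact fun h => absurd isUnit_one h.not_isUnit
    | mul y z _ _ ihy ihz =>
      intro h
      rcases h.isUnit_or_isUnit rfl with h1 | h1
      · rw [Associates.isUnit_iff_eq_one] at h1
        subst h1
        rw [one_mul] at h ⊢; exact ihz h
      · rw [Associates.isUnit_iff_eq_one] at h1
        subst h1
        rw [mul_one] at h ⊢; exact ihy h
  exact key x hmem hx

def Decomp {M : Type*} [CommMonoid M] (x : M) : Prop :=
  ∃ c d : M, c ≠ 1 ∧ d ≠ 1 ∧ lenSet x = lenSet c + lenSet d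

open Classical in
theorem finite_indecomp {H : Type*} [CancelCommMonoid H]
    (hatomic : MonoidAtomic H) (hfg : Monoid.FG (Associates H)) :
    {x : Associates H | x ≠ 1 ∧ ¬ Decomp x}.Finite := by
  by_contra hinf
  let f := Set.Infinite.natEmbedding _ hinf
  have hA := finite_atoms hfg
  obtain ⟨n, ⟨e⟩⟩ := hA.to_subtype.exists_equiv_fin
  have hw := wqo_upper_pi n
  let U : Associates H → UpperSet (Fin n → ℕ) := fun x =>
    ⟨{z | ∃ m, IsFac x m ∧ ∀ i, m.count (e.symm i).1 ≤ z i},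
      fun z w hzw ⟨m, hm, h⟩ => ⟨m, hm, fun i => (h i).trans (hzw i)⟩⟩
  obtain ⟨i, j, hij, h⟩ := (wellQuasiOrdered_le (α := UpperSet (Fin n → ℕ))) (fun i => U (f i).1)
  have hne : (f i).1 ≠ (f j).1 := fun he => hij.ne (f.injective (Subtype.ext he))
  obtain ⟨hx1, _⟩ := (f i).2
  obtain ⟨_, hyd⟩ := (f j).2
  generalize (f i).1 = x at *
  generalize (f j).1 = y at *
  have key : ∀ m, IsFac y m → ∃ m', IsFac x m' ∧ m' ≤ m := by
    intro m hm
    have h1 : (fun i => m.count (e.symm i).1) ∈ U y := ⟨m, hm, fun i => le_rfl⟩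
    obtain ⟨m', hm', hle⟩ := h h1
    refine ⟨m', hm', Multiset.le_iff_count.2 fun u => ?_⟩
    by_cases hu : u ∈ m'
    · have := hle (e ⟨u, hm'.1 u hu⟩)
      simpa using this
    · simp [Multiset.count_eq_zero_of_notMem hu]
  have split : ∀ m, IsFac y m → ∃ m' m'', IsFac x m' ∧ m = m' + m'' ∧
      (∀ u ∈ m'', Irreducible u) ∧ y = x * m''.prod := by
    intro m hm
    obtain ⟨m', hm', hle⟩ := key m hm
    obtain ⟨m'', rfl⟩ := Multiset.le_iff_exists_add.1 hle
    refine ⟨m', m'', hm', rfl, fun u hu => hm.1 u (by simp [hu]), ?_⟩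
    rw [← hm.2, Multiset.prod_add, hm'.2]
  obtain ⟨m0, hm0⟩ := exists_fac hatomic y
  obtain ⟨_, m1, _, _, _, hy⟩ := split m0 hm0
  refine hyd ⟨x, m1.prod, hx1, ?_, ?_⟩
  · intro h1; rw [h1, mul_one] at hy; exact hne hy.symm
  · ext k
    rw [Set.mem_add]
    constructor
    · rintro ⟨m, hm, rfl⟩
      obtain ⟨m', m'', h1, rfl, h2, h3⟩ := split m hm
      exact ⟨_, ⟨m', h1, rfl⟩, _, ⟨m'', ⟨h2, assoc_cancel x _ _ (h3.symm.trans hy)⟩, rfl⟩,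
        by simp⟩
    · rintro ⟨_, ⟨m', h1, rfl⟩, _, ⟨m'', h2, rfl⟩, rfl⟩
      refine ⟨m' + m'', ⟨?_, ?_⟩, by simp⟩
      · intro u hu
        rcases Multiset.mem_add.1 hu with hu | hu
        · exact h1.1 u hu
        · exact h2.1 u hu
      · rw [Multiset.prod_add, h1.2, h2.2, hy]

theorem lenSet_pos {M : Type*} [CommMonoid M] {x : M} (hx : x ≠ 1) {k : ℕ} (hk : k ∈ lenSet x) :
    0 < k := by
  obtain ⟨m, hm, rfl⟩ := hk
  rw [Multiset.card_pos]
  rintro rfl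
  exact hx (by simpa using hm.2.symm)

theorem lenSet_one {H : Type*} [CancelCommMonoid H] : lenSet (1 : Associates H) = 0 := by
  ext k
  rw [Set.mem_zero]
  constructor
  · rintro ⟨m, hm, rfl⟩
    rw [Multiset.card_eq_zero, Multiset.eq_zero_iff_forall_notMem]
    intro u hu
    have h1 : u ∣ 1 := hm.2 ▸ Multiset.dvd_prod hu
    exact (hm.1 u hu).not_isUnit (isUnit_of_dvd_one h1)
  · rintro rfl
    exact ⟨0, ⟨by simp, by simp⟩, rfl⟩

/-- Let `H` be an atomic commutative cancellative monoid whose associated reduced monoid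
`H/H^×` (the monoid of associates) is finitely generated. If `𝓛(H)` is additively closed,
then `𝓛(H)` is a finitely generated semigroup under sumset addition: there are finitely many
`L₁, …, L_m ∈ 𝓛(H)` such that every member of `𝓛(H)` is a finite (possibly empty, yielding
the identity `{0}`) sum of sets from `{L₁, …, L_m}`. -/
theorem system_finitely_generated_of_additively_closed {H : Type*} [CancelCommMonoid H]
    (hatomic : MonoidAtomic H) (hfg : Monoid.FG (Associates H))
    (hclosed : ∀ L₁ ∈ systemOfLengths H, ∀ L₂ ∈ systemOfLengths H,
      L₁ + L₂ ∈ systemOfLengths H) :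
    ∃ (m : ℕ) (L : Fin m → Set ℕ),
      (∀ i, L i ∈ systemOfLengths H) ∧
      ∀ S ∈ systemOfLengths H, ∃ c : Multiset (Fin m), S = ((c.map L).sum) := by
  obtain ⟨n, ⟨e⟩⟩ := (finite_indecomp hatomic hfg).to_subtype.exists_equiv_fin
  refine ⟨n, fun i => lenSet (e.symm i).1, ?_, ?_⟩
  · intro i
    obtain ⟨a, ha⟩ := Associates.mk_surjective (e.symm i).1
    exact ⟨a, by rw [← lenSet_mk, ha]⟩
  · have key : ∀ k : ℕ, ∀ x : Associates H, k ∈ lenSet x →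
        ∃ c : Multiset (Fin n), lenSet x = ((c.map fun i => lenSet (e.symm i).1).sum) := by
      intro k
      induction k using Nat.strong_induction_on with
      | _ k ih =>
        intro x hk
        by_cases hx : x = 1
        · exact ⟨0, by simp [hx, lenSet_one]⟩
        by_cases hd : Decomp x
        · obtain ⟨c, d, hc, hd, hcd⟩ := hd
          rw [hcd] at hk
          obtain ⟨p, hp, q, hq, rfl⟩ := Set.mem_add.1 hk
          have hp0 := lenSet_pos hc hp
          have hq0 := lenSet_pos hd hq
          obtain ⟨s, hs⟩ := ih p (by omega) c hp
          obtain ⟨t, ht⟩ := ih q (by omega) d hq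
          exact ⟨s + t, by rw [hcd, hs, ht, Multiset.map_add, Multiset.sum_add]⟩
        · exact ⟨{e ⟨x, hx, hd⟩}, by simp⟩
    rintro _ ⟨a, rfl⟩
    obtain ⟨m, hm⟩ := exists_fac hatomic (Associates.mk a)
    rw [← lenSet_mk]
    exact key _ _ ⟨m, hm, rfl⟩
end
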